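/- There is an absolute constant c such that for every m ≥ 1 and every m×m complex matrix A with zero trace, there exist m×m matrices B and C with A = BC - CB, B normal, and ‖B‖·‖C‖₂ ≤ (c + log m)^{1/2}·‖A‖₂. -/

import Mathlib

noncomputable def opNorm {m : ℕ} (A : Matrix (Fin m) (Fin m) ℂ) : ℝ :=
  ‖Matrix.toEuclideanCLM (𝕜 := ℂ) (n := Fin m) A‖

noncomputable def frobNorm {m : ℕ} (A : Matrix (Fin m) (Fin m) ℂ) : ℝ :=
  Real.sqrt (∑ i, ∑ j, ‖A i j‖ ^ 2)

/-!
In an orthonormal basis where `A` has zero diagonal, take `B` diagonal with distinct entries `dᵢ` in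
the closed unit disc. Then `C` must have entries `aᵢⱼ / (dᵢ - dⱼ)`, so the `dᵢ` have to satisfy
`∑ |aᵢⱼ|² / |dᵢ - dⱼ|² ≤ (c + log m) ∑ |aᵢⱼ|²`. Averaging over all permutations of a fixed set of
points shows that some ordering works as soon as, for every `k`, the mean of `|d_k - d_l|⁻²` over
`l ≠ k` is at most `c + log m`. This holds for `m` Gaussian integers of modulus at most
`R = √(m / π) + 1`, scaled by `1 / R`: the sum of `|q|⁻²` over nonzero Gaussian integers with
`|q| ≤ 2R` is `2π log R + O(1)`, and `R² · 2π log R ≈ m log m`.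
-/

open Finset Module
open Unitary (conjStarAlgAut)
open scoped Real

section ZeroDiagonal

lemma sum_intUnits_mul_eq_zero {ι : Type*} [Fintype ι] [DecidableEq ι] {i j : ι} (hij : i ≠ j) :
    ∑ ε : ι → ℤˣ, ((ε i : ℤ) * (ε j : ℤ) : ℂ) = 0 := by
  have hflip : ∑ ε : ι → ℤˣ, ((ε i : ℤ) * (ε j : ℤ) : ℂ) =
      ∑ ε : ι → ℤˣ, -((ε i : ℤ) * (ε j : ℤ) : ℂ) :=
    Fintype.sum_equiv (Equiv.mulLeft (Pi.mulSingle i (-1))) _ _ fun ε ↦ by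
      simp [Pi.mulSingle_eq_of_ne hij.symm]
  rw [sum_neg_distrib] at hflip
  exact self_eq_neg.mp hflip

lemma isPreconnected_setOf_norm_eq_one {ι : Type*} :
    IsPreconnected {z : ι → ℂ | ∀ i, ‖z i‖ = 1} := by
  have : {z : ι → ℂ | ∀ i, ‖z i‖ = 1} = Set.univ.pi fun _ ↦ Metric.sphere 0 1 := by
    ext z; simp
  rw [this]
  exact isPreconnected_univ_pi fun _ ↦ isPreconnected_sphere (by simp) 0 1

variable {ι E : Type*} [Fintype ι] [NormedAddCommGroup E] [InnerProductSpace ℂ E]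

lemma inner_sum_smul_map_sum_smul (b : ι → E) (T : E →ₗ[ℂ] E) (z : ι → ℂ) :
    inner ℂ (∑ i, z i • b i) (T (∑ i, z i • b i)) =
      ∑ i, ∑ j, star (z i) * z j * inner ℂ (b i) (T (b j)) := by
  simp only [map_sum, map_smul, sum_inner, inner_sum, inner_smul_left, inner_smul_right, mul_sum,
    starRingEnd_apply, mul_assoc]
  rw [sum_comm]
  simp only [mul_left_comm]

lemma sum_intUnits_inner_map_eq_card_smul_trace [DecidableEq ι] (b : OrthonormalBasis ι ℂ E)
    (T : E →ₗ[ℂ] E) :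
    ∑ ε : ι → ℤˣ, inner ℂ (∑ i, ((ε i : ℤ) : ℂ) • b i) (T (∑ i, ((ε i : ℤ) : ℂ) • b i)) =
      Fintype.card (ι → ℤˣ) • T.trace ℂ E := by
  simp only [inner_sum_smul_map_sum_smul, T.trace_eq_sum_inner b, smul_sum]
  rw [sum_comm]
  refine sum_congr rfl fun i _ ↦ ?_
  rw [sum_comm, sum_eq_single i]
  · have hsq (ε : ι → ℤˣ) : ((ε i : ℤ) * (ε i : ℤ) : ℂ) = 1 := by
      exact_mod_cast Int.units_coe_mul_self (ε i)
    simp [hsq]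
  · intro j _ hji
    simp only [star_intCast, ← sum_mul, sum_intUnits_mul_eq_zero hji.symm, zero_mul]
  · simp

variable [FiniteDimensional ℂ E]

lemma inner_add_adjoint_apply_self (T : E →ₗ[ℂ] E) (v : E) :
    inner ℂ v ((T + T.adjoint) v) = (2 * (inner ℂ v (T v)).re : ℝ) := by
  rw [LinearMap.add_apply, inner_add_right, LinearMap.adjoint_inner_right,
    ← inner_conj_symm (T v) v, Complex.add_conj]

lemma re_inner_map_eq_re_trace_of_norm_eq_one (b : OrthonormalBasis ι ℂ E) {T : E →ₗ[ℂ] E}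
    {μ : ι → ℂ} (hb : ∀ i, (T + T.adjoint) (b i) = μ i • b i) {z : ι → ℂ} (hz : ∀ i, ‖z i‖ = 1) :
    (inner ℂ (∑ i, z i • b i) (T (∑ i, z i • b i))).re = (T.trace ℂ E).re := by
  classical
  have hform : inner ℂ (∑ i, z i • b i) ((T + T.adjoint) (∑ i, z i • b i)) =
      ∑ i, inner ℂ (b i) ((T + T.adjoint) (b i)) := by
    rw [inner_sum_smul_map_sum_smul]
    refine sum_congr rfl fun i _ ↦ ?_
    rw [sum_eq_single i]
    · rw [Complex.star_def, Complex.conj_mul', hz]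
      simp
    · intro j _ hji
      rw [hb, inner_smul_right, b.inner_eq_zero hji.symm, mul_zero, mul_zero]
    · simp
  simp only [inner_add_adjoint_apply_self] at hform
  rw [T.trace_eq_sum_inner b, Complex.re_sum]
  norm_cast at hform
  rw [← mul_sum] at hform
  exact mul_left_cancel₀ two_ne_zero hform

-- With unimodular coefficients in an eigenbasis of `T + T*`, the real part of the form is constant,
-- equal to `re (tr T) = 0`. The imaginary part averages to zero over the choices of signs, so it
-- vanishes somewhere on the connected torus of phases.
theorem exists_norm_eq_one_inner_map_self_eq_zero [Nontrivial E] {T : E →ₗ[ℂ] E}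
    (hT : T.trace ℂ E = 0) : ∃ v : E, ‖v‖ = 1 ∧ inner ℂ v (T v) = 0 := by
  suffices h : ∃ v : E, v ≠ 0 ∧ inner ℂ v (T v) = 0 by
    obtain ⟨v, hv, hTv⟩ := h
    exact ⟨((‖v‖⁻¹ : ℝ) : ℂ) • v, by simp [norm_smul, hv], by simp [hTv]⟩
  have hsymm : (T + T.adjoint).IsSymmetric :=
    (T + T.adjoint).isSymmetric_iff_isSelfAdjoint.mpr (.add_star_self T)
  let b := hsymm.eigenvectorBasis rfl
  let v (z : Fin (finrank ℂ E) → ℂ) : E := ∑ i, z i • b i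
  let f (z : Fin (finrank ℂ E) → ℂ) : ℝ := (inner ℂ (v z) (T (v z))).im
  have hsum : ∑ ε : Fin (finrank ℂ E) → ℤˣ, f (fun i ↦ (ε i : ℤ)) = 0 := by
    rw [← Complex.im_sum, sum_intUnits_inner_map_eq_card_smul_trace, hT, smul_zero, Complex.zero_im]
  obtain ⟨ε, -, hε⟩ := exists_le_of_sum_le univ_nonempty (hsum.trans sum_const_zero.symm).le
  obtain ⟨δ, -, hδ⟩ := exists_le_of_sum_le univ_nonempty (sum_const_zero.trans hsum.symm).le
  have hf : Continuous f := by
    have := T.continuous_of_finiteDimensional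
    fun_prop
  have hsign (ε : Fin (finrank ℂ E) → ℤˣ) (i) : ‖((ε i : ℤ) : ℂ)‖ = 1 := by
    rcases Int.units_eq_one_or (ε i) with h | h <;> simp [h]
  obtain ⟨z, hz, hfz⟩ := isPreconnected_setOf_norm_eq_one.intermediate_value (hsign ε) (hsign δ)
    hf.continuousOn ⟨hε, hδ⟩
  refine ⟨v z, fun h0 ↦ ?_, Complex.ext ?_ hfz⟩
  · have := Fintype.linearIndependent_iff.mp b.orthonormal.linearIndependent z h0 ⟨0, finrank_pos⟩
    simpa [this] using hz ⟨0, finrank_pos⟩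
  · rw [re_inner_map_eq_re_trace_of_norm_eq_one b (hsymm.apply_eigenvectorBasis rfl) hz, hT]

lemma trace_compression_orthogonal_span_singleton (T : E →ₗ[ℂ] E) {v : E} (hv : ‖v‖ = 1) :
    LinearMap.trace ℂ (ℂ ∙ v)ᗮ
      ((ℂ ∙ v)ᗮ.orthogonalProjectionOnto ∘ₗ T ∘ₗ (ℂ ∙ v)ᗮ.subtype) =
      T.trace ℂ E - inner ℂ v (T v) := by
  have hproj : ((ℂ ∙ v)ᗮ.subtype ∘ₗ (ℂ ∙ v)ᗮ.orthogonalProjectionOnto) ∘ₗ T =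
      T - InnerProductSpace.rankOne ℂ v v ∘ₗ T := by
    ext x
    simp [Submodule.starProjection_orthogonal, Submodule.starProjection_unit_singleton ℂ hv]
  have hrank : T ∘ₗ (InnerProductSpace.rankOne ℂ v v).toLinearMap =
      (InnerProductSpace.rankOne ℂ (T v) v).toLinearMap := by
    ext x
    simp
  rw [← LinearMap.comp_assoc, LinearMap.trace_comp_comm', ← LinearMap.comp_assoc, hproj, map_sub,
    LinearMap.trace_comp_comm', hrank, InnerProductSpace.trace_rankOne]

theorem exists_orthonormalBasis_inner_map_self_eq_zero {n : ℕ} (hn : finrank ℂ E = n)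
    {T : E →ₗ[ℂ] E} (hT : T.trace ℂ E = 0) :
    ∃ b : OrthonormalBasis (Fin n) ℂ E, ∀ i, inner ℂ (b i) (T (b i)) = 0 := by
  induction n generalizing E with
  | zero => exact ⟨(stdOrthonormalBasis ℂ E).reindex (finCongr hn), fun i ↦ i.elim0⟩
  | succ n ih =>
    have : Nontrivial E := nontrivial_of_finrank_eq_succ hn
    have : Fact (finrank ℂ E = n + 1) := ⟨hn⟩
    obtain ⟨v, hv, hTv⟩ := exists_norm_eq_one_inner_map_self_eq_zero hT
    obtain ⟨c, hc⟩ := ih (E := (ℂ ∙ v)ᗮ)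
      (Submodule.finrank_orthogonal_span_singleton (norm_ne_zero_iff.mp (hv ▸ one_ne_zero)))
      (T := (ℂ ∙ v)ᗮ.orthogonalProjectionOnto ∘ₗ T ∘ₗ (ℂ ∙ v)ᗮ.subtype)
      (by rw [trace_compression_orthogonal_span_singleton T hv, hT, hTv, sub_zero])
    have hon : Orthonormal ℂ (Matrix.vecCons v fun i ↦ (c i : E)) :=
      orthonormal_vecCons_iff.mpr ⟨hv,
        fun i ↦ Submodule.mem_orthogonal_singleton_iff_inner_right.mp (c i).2,
        c.orthonormal.comp_linearIsometry (ℂ ∙ v)ᗮ.subtypeₗᵢ⟩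
    refine ⟨.mk hon (hon.linearIndependent.span_eq_top_of_card_eq_finrank' (by simp [hn])).ge, ?_⟩
    simpa [Fin.forall_fin_succ, hTv] using hc

end ZeroDiagonal

section UnitaryConjugation

variable {m : ℕ}

theorem exists_unitary_conj_diag_eq_zero {A : Matrix (Fin m) (Fin m) ℂ} (hA : A.trace = 0) :
    ∃ U : Matrix.unitaryGroup (Fin m) ℂ, ∀ i, conjStarAlgAut ℂ _ (star U) A i i = 0 := by
  have htrace : (Matrix.toEuclideanLin A).trace ℂ _ = 0 := by
    rw [Matrix.toEuclideanLin, Matrix.toLpLin_eq_toLin, Matrix.trace_toLin_eq, hA]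
  obtain ⟨b, hb⟩ := exists_orthonormalBasis_inner_map_self_eq_zero finrank_euclideanSpace_fin htrace
  let e := EuclideanSpace.basisFun (Fin m) ℂ
  refine ⟨⟨_, e.toMatrix_orthonormalBasis_mem_unitary b⟩, fun i ↦ ?_⟩
  rw [Unitary.conjStarAlgAut_star_apply, mul_assoc, ← hb i]
  simp [Matrix.mul_apply, PiLp.inner_apply, Matrix.toLpLin_apply, Matrix.mulVec, dotProduct,
    mul_comm, e, Module.Basis.toMatrix_apply]

lemma sum_sum_norm_sq_eq_trace {m n : Type*} [Fintype m] [Fintype n] (A : Matrix m n ℂ) :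
    ((∑ i, ∑ j, ‖A i j‖ ^ 2 : ℝ) : ℂ) = (A.conjTranspose * A).trace := by
  simp only [Matrix.trace, Matrix.diag_apply, Matrix.mul_apply, Matrix.conjTranspose_apply,
    Complex.star_def, Complex.conj_mul']
  rw [sum_comm]
  norm_cast

lemma frobNorm_conjStarAlgAut (U : Matrix.unitaryGroup (Fin m) ℂ) (A : Matrix (Fin m) (Fin m) ℂ) :
    frobNorm (conjStarAlgAut ℂ _ U A) = frobNorm A := by
  rw [frobNorm, frobNorm]
  congr 1
  apply Complex.ofReal_injective
  rw [sum_sum_norm_sq_eq_trace, sum_sum_norm_sq_eq_trace, ← Matrix.star_eq_conjTranspose,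
    ← map_star, ← map_mul, Unitary.conjStarAlgAut_apply, Matrix.trace_mul_comm, ← mul_assoc,
    Unitary.coe_star_mul_self, one_mul, Matrix.star_eq_conjTranspose]

open scoped Matrix.Norms.L2Operator in
lemma opNorm_conjStarAlgAut (U : Matrix.unitaryGroup (Fin m) ℂ) (A : Matrix (Fin m) (Fin m) ℂ) :
    opNorm (conjStarAlgAut ℂ _ U A) = opNorm A :=
  StarAlgEquiv.norm_map (conjStarAlgAut ℂ _ U) A

open scoped Matrix.Norms.L2Operator in
lemma opNorm_diagonal (d : Fin m → ℂ) : opNorm (Matrix.diagonal d) = ‖d‖ :=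
  Matrix.l2_opNorm_diagonal d

end UnitaryConjugation

section PermutationAverage

variable {ι : Type*} [Fintype ι] [DecidableEq ι]

lemma sum_perm_apply_apply_le {g : ι → ι → ℝ} {K : ℝ}
    (hg : ∀ k, ∑ l ∈ univ.erase k, g k l ≤ (Fintype.card ι - 1) * K) {i j : ι} (hij : i ≠ j) :
    ∑ σ : Equiv.Perm ι, g (σ i) (σ j) ≤ Fintype.card (Equiv.Perm ι) * K := by
  have hcard : (0 : ℝ) < Fintype.card ι - 1 := by
    have : 1 < Fintype.card ι := Fintype.one_lt_card_iff.mpr ⟨i, j, hij⟩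
    rify at this
    linarith
  have hswap : ∀ l ∈ univ.erase i, ∑ σ : Equiv.Perm ι, g (σ i) (σ l) =
      ∑ σ : Equiv.Perm ι, g (σ i) (σ j) := fun l hl ↦
    Fintype.sum_equiv (Equiv.mulRight (Equiv.swap j l)) _ _ fun σ ↦ by
      simp [Equiv.swap_apply_of_ne_of_ne hij (ne_of_mem_erase hl).symm]
  refine le_of_mul_le_mul_left ?_ hcard
  calc (Fintype.card ι - 1) * ∑ σ : Equiv.Perm ι, g (σ i) (σ j)
      = ∑ l ∈ univ.erase i, ∑ σ : Equiv.Perm ι, g (σ i) (σ l) := by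
        rw [sum_congr rfl hswap, sum_const, nsmul_eq_mul, cast_card_erase_of_mem (mem_univ i),
          card_univ]
    _ = ∑ σ : Equiv.Perm ι, ∑ l ∈ univ.erase (σ i), g (σ i) l := by
        rw [sum_comm]
        refine sum_congr rfl fun σ _ ↦ sum_equiv σ (by simp) fun _ _ ↦ rfl
    _ ≤ ∑ _σ : Equiv.Perm ι, (Fintype.card ι - 1) * K := sum_le_sum fun σ _ ↦ hg (σ i)
    _ = (Fintype.card ι - 1) * (Fintype.card (Equiv.Perm ι) * K) := by
        rw [sum_const, card_univ, nsmul_eq_mul, mul_left_comm]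

theorem exists_perm_sum_mul_le {a g : ι → ι → ℝ} {K : ℝ} (ha : ∀ i j, 0 ≤ a i j)
    (ha_diag : ∀ i, a i i = 0)
    (hg : ∀ k, ∑ l ∈ univ.erase k, g k l ≤ (Fintype.card ι - 1) * K) :
    ∃ σ : Equiv.Perm ι, ∑ i, ∑ j, a i j * g (σ i) (σ j) ≤ K * ∑ i, ∑ j, a i j := by
  suffices h : ∑ σ : Equiv.Perm ι, ∑ i, ∑ j, a i j * g (σ i) (σ j) ≤
      ∑ _σ : Equiv.Perm ι, K * ∑ i, ∑ j, a i j by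
    obtain ⟨σ, -, hσ⟩ := exists_le_of_sum_le univ_nonempty h
    exact ⟨σ, hσ⟩
  calc ∑ σ : Equiv.Perm ι, ∑ i, ∑ j, a i j * g (σ i) (σ j)
      = ∑ i, ∑ j, a i j * ∑ σ : Equiv.Perm ι, g (σ i) (σ j) := by
        simp only [mul_sum]
        rw [sum_comm]
        exact sum_congr rfl fun i _ ↦ sum_comm
    _ ≤ ∑ i, ∑ j, a i j * (Fintype.card (Equiv.Perm ι) * K) := by
        refine sum_le_sum fun i _ ↦ sum_le_sum fun j _ ↦ ?_
        rcases eq_or_ne i j with rfl | hij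
        · simp [ha_diag]
        · exact mul_le_mul_of_nonneg_left (sum_perm_apply_apply_le hg hij) (ha i j)
    _ = ∑ _σ : Equiv.Perm ι, K * ∑ i, ∑ j, a i j := by
        simp only [← sum_mul, sum_const, card_univ, nsmul_eq_mul]
        ring

end PermutationAverage

section LatticeSum

lemma sum_range_inv_sq_add_sq_le {c : ℝ} (hc : 0 < c) (N : ℕ) :
    ∑ k ∈ range N, (c ^ 2 + ((k + 1 : ℕ) : ℝ) ^ 2)⁻¹ ≤ π / (2 * c) := by
  have hanti : AntitoneOn (fun x : ℝ ↦ (c ^ 2 + x ^ 2)⁻¹) (Set.Icc 0 (0 + N)) :=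
    fun x hx y _ hxy ↦ inv_anti₀ (by positivity) (by gcongr; exact hx.1)
  calc ∑ k ∈ range N, (c ^ 2 + ((k + 1 : ℕ) : ℝ) ^ 2)⁻¹
      ≤ ∫ x in (0 : ℝ)..0 + N, (c ^ 2 + x ^ 2)⁻¹ := by
        simpa only [zero_add] using hanti.sum_le_integral
    _ = c⁻¹ * Real.arctan (N / c) := by
        rw [integral_inv_sq_add_sq hc.ne', zero_add, zero_div, Real.arctan_zero, sub_zero]
    _ ≤ c⁻¹ * (π / 2) := by gcongr; exact (Real.arctan_lt_pi_div_two _).le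
    _ = π / (2 * c) := by field_simp

lemma sum_range_inv_succ_sq_le_two (N : ℕ) : ∑ k ∈ range N, (((k + 1 : ℕ) : ℝ) ^ 2)⁻¹ ≤ 2 := by
  have h := sum_Ioo_inv_sq_le (α := ℝ) 0 (N + 1)
  rwa [← Ico_add_one_left_eq_Ioo, zero_add, sum_Ico_eq_sum_range, Nat.add_sub_cancel, Nat.cast_zero,
    zero_add, div_one, sum_congr rfl fun k _ ↦ by rw [add_comm 1 k]] at h

lemma sum_range_inv_succ_le_one_add_log (N : ℕ) :
    ∑ k ∈ range N, ((k + 1 : ℕ) : ℝ)⁻¹ ≤ 1 + Real.log N := by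
  simpa [harmonic] using harmonic_le_one_add_log N

lemma sum_Icc_neg_of_even {f : ℤ → ℝ} (hf : f.Even) (N : ℕ) :
    ∑ m ∈ Icc (-N : ℤ) N, f m = f 0 + 2 * ∑ k ∈ range N, f (k + 1 : ℕ) := by
  rw [sum_Icc_of_even_eq_range hf, sum_range_succ', nsmul_eq_mul, Nat.cast_zero]
  push_cast
  ring

lemma sum_Icc_inv_sq_add_sq_le {c : ℝ} (hc : 0 < c) (N : ℕ) :
    ∑ x ∈ Icc (-N : ℤ) N, (c ^ 2 + (x : ℝ) ^ 2)⁻¹ ≤ (c ^ 2)⁻¹ + π * c⁻¹ := by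
  rw [sum_Icc_neg_of_even fun x ↦ by simp]
  have h := sum_range_inv_sq_add_sq_le hc N
  have hpi : 2 * (π / (2 * c)) = π * c⁻¹ := by field_simp
  simp only [Int.cast_natCast, Int.cast_zero, zero_pow two_ne_zero, add_zero]
  linarith

-- The term at the origin is `0⁻¹ = 0`.
lemma sum_Icc_sum_Icc_inv_sq_add_sq_le (N : ℕ) :
    ∑ y ∈ Icc (-N : ℤ) N, ∑ x ∈ Icc (-N : ℤ) N, ((y : ℝ) ^ 2 + (x : ℝ) ^ 2)⁻¹ ≤
      8 + 2 * π * (1 + Real.log N) := by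
  have hzero : ∑ x ∈ Icc (-N : ℤ) N, (((0 : ℤ) : ℝ) ^ 2 + (x : ℝ) ^ 2)⁻¹ ≤ 4 := by
    have h := sum_range_inv_succ_sq_le_two N
    rw [sum_Icc_neg_of_even fun x ↦ by simp]
    simp only [Int.cast_natCast, Int.cast_zero, zero_pow two_ne_zero, zero_add, inv_zero]
    linarith
  have hpos : ∑ k ∈ range N, ∑ x ∈ Icc (-N : ℤ) N,
      ((((k + 1 : ℕ) : ℤ) : ℝ) ^ 2 + (x : ℝ) ^ 2)⁻¹ ≤ 2 + π * (1 + Real.log N) :=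
    calc _ ≤ ∑ k ∈ range N, ((((k + 1 : ℕ) : ℝ) ^ 2)⁻¹ + π * ((k + 1 : ℕ) : ℝ)⁻¹) :=
          sum_le_sum fun k _ ↦ sum_Icc_inv_sq_add_sq_le (by positivity) N
      _ ≤ _ := by
          rw [sum_add_distrib, ← mul_sum]
          gcongr
          · exact sum_range_inv_succ_sq_le_two N
          · exact sum_range_inv_succ_le_one_add_log N
  rw [sum_Icc_neg_of_even fun y ↦ by simp]
  linarith

lemma gaussianInt_re_im_injective : Function.Injective fun q : GaussianInt ↦ (q.re, q.im) :=
  fun _ _ h ↦ Zsqrtd.ext (congrArg Prod.fst h) (congrArg Prod.snd h)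

lemma norm_toComplex_sq (q : GaussianInt) : ‖(q : ℂ)‖ ^ 2 = (q.re : ℝ) ^ 2 + (q.im : ℝ) ^ 2 := by
  rw [Complex.sq_norm, Complex.normSq_apply, GaussianInt.intCast_re, GaussianInt.intCast_im]
  ring

theorem sum_inv_norm_sq_gaussianInt_le {r : ℝ} (hr : 1 ≤ r) {S : Finset GaussianInt}
    (hS : ∀ q ∈ S, ‖(q : ℂ)‖ ≤ r) :
    ∑ q ∈ S, (‖(q : ℂ)‖ ^ 2)⁻¹ ≤ 8 + 2 * π * (1 + Real.log r) := by
  have hmem (n : ℤ) (hn : |(n : ℝ)| ≤ r) : n ∈ Icc (-⌊r⌋₊ : ℤ) ⌊r⌋₊ := by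
    rw [mem_Icc, ← abs_le, Int.abs_eq_natAbs, Nat.cast_le,
      Nat.le_floor_iff (by linarith), Nat.cast_natAbs]
    exact_mod_cast hn
  calc ∑ q ∈ S, (‖(q : ℂ)‖ ^ 2)⁻¹
      = ∑ p ∈ S.image fun q ↦ ((q.re, q.im) : ℤ × ℤ), ((p.1 : ℝ) ^ 2 + (p.2 : ℝ) ^ 2)⁻¹ := by
        rw [sum_image gaussianInt_re_im_injective.injOn]
        simp only [norm_toComplex_sq]
    _ ≤ ∑ p ∈ Icc (-⌊r⌋₊ : ℤ) ⌊r⌋₊ ×ˢ Icc (-⌊r⌋₊ : ℤ) ⌊r⌋₊, ((p.1 : ℝ) ^ 2 + (p.2 : ℝ) ^ 2)⁻¹ := by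
        refine sum_le_sum_of_subset_of_nonneg (image_subset_iff.mpr fun q hq ↦ ?_)
          fun _ _ _ ↦ by positivity
        exact mem_product.mpr
          ⟨hmem _ (by simpa using (Complex.abs_re_le_norm q).trans (hS q hq)),
            hmem _ (by simpa using (Complex.abs_im_le_norm q).trans (hS q hq))⟩
    _ ≤ 8 + 2 * π * (1 + Real.log ⌊r⌋₊) := by
        rw [sum_product]
        exact sum_Icc_sum_Icc_inv_sq_add_sq_le ⌊r⌋₊
    _ ≤ 8 + 2 * π * (1 + Real.log r) := by
        gcongr
        · exact_mod_cast Nat.floor_pos.mpr hr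
        · exact Nat.floor_le (by linarith)

end LatticeSum

section LatticeCount

open MeasureTheory

/-- The closed square of side `1` with sides parallel to the axes, centred at `z`. -/
def unitSquare (z : ℂ) : Set ℂ :=
  Set.Icc (z.re - 1 / 2) (z.re + 1 / 2) ×ℂ Set.Icc (z.im - 1 / 2) (z.im + 1 / 2)

lemma volume_unitSquare (z : ℂ) : volume (unitSquare z) = 1 := by
  change volume (Complex.measurableEquivRealProd ⁻¹' (Set.Icc _ _ ×ˢ Set.Icc _ _)) = 1
  rw [Complex.volume_preserving_equiv_real_prod.measure_preimage
      (measurableSet_Icc.prod measurableSet_Icc).nullMeasurableSet,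
    Measure.volume_eq_prod, Measure.prod_prod, Real.volume_Icc, Real.volume_Icc]
  norm_num

lemma exists_gaussianInt_mem_unitSquare (z : ℂ) : ∃ q : GaussianInt, z ∈ unitSquare q := by
  refine ⟨⟨round z.re, round z.im⟩, Complex.mem_reProdIm.mpr ⟨?_, ?_⟩⟩
  · have h := abs_le.mp (abs_sub_round z.re)
    rw [← GaussianInt.intCast_re]
    constructor <;> linarith
  · have h := abs_le.mp (abs_sub_round z.im)
    rw [← GaussianInt.intCast_im]
    constructor <;> linarith

lemma norm_sub_le_one_of_mem_unitSquare {z w : ℂ} (h : w ∈ unitSquare z) : ‖z - w‖ ≤ 1 := by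
  obtain ⟨hre, him⟩ := Complex.mem_reProdIm.mp h
  have hre' : |(z - w).re| ≤ 1 / 2 := by
    rw [Complex.sub_re, abs_le]
    constructor <;> linarith [hre.1, hre.2]
  have him' : |(z - w).im| ≤ 1 / 2 := by
    rw [Complex.sub_im, abs_le]
    constructor <;> linarith [him.1, him.2]
  linarith [Complex.norm_le_abs_re_add_abs_im (z - w)]

theorem ofReal_pi_mul_sq_le_encard_setOf_norm_toComplex_le {R : ℝ} (hR : 1 ≤ R) :
    ENNReal.ofReal (π * (R - 1) ^ 2) ≤ {q : GaussianInt | ‖(q : ℂ)‖ ≤ R}.encard := by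
  have hcov : Metric.ball (0 : ℂ) (R - 1) ⊆
      ⋃ q : {q : GaussianInt | ‖(q : ℂ)‖ ≤ R}, unitSquare (q : GaussianInt) := fun z hz ↦ by
    obtain ⟨q, hq⟩ := exists_gaussianInt_mem_unitSquare z
    refine Set.mem_iUnion.mpr ⟨⟨q, ?_⟩, hq⟩
    have h := norm_sub_le_one_of_mem_unitSquare hq
    rw [mem_ball_zero_iff] at hz
    exact (norm_le_norm_add_norm_sub' (q : ℂ) z).trans (by linarith)
  have : Countable GaussianInt := gaussianInt_re_im_injective.countable
  calc ENNReal.ofReal (π * (R - 1) ^ 2) = volume (Metric.ball (0 : ℂ) (R - 1)) := by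
        rw [Complex.volume_ball, mul_comm, ENNReal.ofReal_mul (by positivity),
          ENNReal.ofReal_pow (by linarith), ← NNReal.coe_real_pi, ENNReal.ofReal_coe_nnreal]
    _ ≤ ∑' q : {q : GaussianInt | ‖(q : ℂ)‖ ≤ R}, volume (unitSquare (q : GaussianInt)) :=
        (measure_mono hcov).trans (measure_iUnion_le _)
    _ = {q : GaussianInt | ‖(q : ℂ)‖ ≤ R}.encard := by
        simp only [volume_unitSquare, ENNReal.tsum_set_one]

theorem exists_injective_gaussianInt_norm_le (ι : Type*) [Fintype ι] :
    ∃ p : ι → GaussianInt, Function.Injective p ∧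
      ∀ i, ‖(p i : ℂ)‖ ≤ √(Fintype.card ι / π) + 1 := by
  have hcount := ofReal_pi_mul_sq_le_encard_setOf_norm_toComplex_le
    (le_add_of_nonneg_left (Real.sqrt_nonneg (Fintype.card ι / π)) : (1 : ℝ) ≤ _)
  rw [add_sub_cancel_right, Real.sq_sqrt (by positivity), mul_div_cancel₀ _ Real.pi_ne_zero,
    ENNReal.ofReal_natCast, ← ENat.toENNReal_coe, ENat.toENNReal_le,
    ← ENat.card_eq_coe_fintype_card, ← Set.encard_univ] at hcount
  obtain ⟨p, hp, hinj⟩ := Set.finite_univ.exists_injOn_of_encard_le hcount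
  exact ⟨p, Set.injOn_univ.mp hinj, fun i ↦ hp (Set.mem_univ i)⟩

end LatticeCount

section DiscPoints

variable {ι : Type*} [Fintype ι] [DecidableEq ι]

lemma sum_inv_norm_sub_sq_gaussianInt_le {p : ι → GaussianInt} (hp : Function.Injective p) {R : ℝ}
    (hR : 1 ≤ R) (hpR : ∀ i, ‖(p i : ℂ)‖ ≤ R) (k : ι) :
    ∑ l ∈ univ.erase k, (‖(p k : ℂ) - p l‖ ^ 2)⁻¹ ≤
      8 + 2 * π * (1 + Real.log (2 * R)) := by
  have hinj : Function.Injective fun l ↦ p k - p l := sub_right_injective.comp hp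
  have h := sum_inv_norm_sq_gaussianInt_le (r := 2 * R) (by linarith)
    (S := (univ.erase k).image fun l ↦ p k - p l) fun q hq ↦ by
      obtain ⟨l, -, rfl⟩ := mem_image.mp hq
      rw [GaussianInt.toComplex_sub]
      linarith [norm_sub_le (p k : ℂ) (p l), hpR k, hpR l]
  simpa only [sum_image hinj.injOn, GaussianInt.toComplex_sub] using h

lemma sqrt_div_pi_le_sqrt {x : ℝ} (hx : 0 ≤ x) : √(x / π) ≤ √x :=
  Real.sqrt_le_sqrt (div_le_self hx (by linarith [Real.pi_gt_three]))

lemma log_two_mul_sqrt_div_pi_add_one_le {x : ℝ} (hx : 1 ≤ x) :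
    Real.log (2 * (√(x / π) + 1)) ≤ 3 + Real.log x / 2 := by
  have hs : 1 ≤ √x := Real.one_le_sqrt.mpr hx
  calc Real.log (2 * (√(x / π) + 1)) ≤ Real.log (4 * √x) :=
        Real.log_le_log (by positivity) (by linarith [sqrt_div_pi_le_sqrt (by linarith : 0 ≤ x)])
    _ = Real.log 4 + Real.log x / 2 := by
        rw [Real.log_mul (by norm_num) (by linarith), Real.log_sqrt (by linarith)]
    _ ≤ 3 + Real.log x / 2 := by linarith [Real.log_le_sub_one_of_pos (x := 4) (by norm_num)]

lemma sq_sqrt_div_pi_add_one_mul_le {x : ℝ} (hx : 1 ≤ x) :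
    (√(x / π) + 1) ^ 2 * (8 + 2 * π * (1 + Real.log (2 * (√(x / π) + 1)))) ≤
      x * (155 + Real.log x) := by
  set R := √(x / π) + 1 with hR
  have hpi := Real.pi_lt_d2
  have hlog : 0 ≤ Real.log x := Real.log_nonneg hx
  have hs : 1 ≤ √x := Real.one_le_sqrt.mpr hx
  have hsx : √x ^ 2 = x := Real.sq_sqrt (by linarith)
  have hRs : R ≤ √x + 1 := by linarith [sqrt_div_pi_le_sqrt (by linarith : 0 ≤ x)]
  have hlog_le : Real.log x ≤ 2 * √x := by
    linarith [Real.log_le_self (Real.sqrt_nonneg x), Real.log_sqrt (by linarith : 0 ≤ x)]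
  have hRsq : R ^ 2 ≤ x / π + 3 * √x := by
    rw [hR, add_sq, Real.sq_sqrt (by positivity)]
    linarith
  have hRsq' : R ^ 2 ≤ 4 * x :=
    calc R ^ 2 ≤ (2 * √x) ^ 2 := by gcongr; linarith
      _ = 4 * x := by rw [mul_pow, hsx]; norm_num
  calc R ^ 2 * (8 + 2 * π * (1 + Real.log (2 * R)))
      ≤ R ^ 2 * (8 + 2 * π * (1 + (3 + Real.log x / 2))) := by
        gcongr
        exact log_two_mul_sqrt_div_pi_add_one_le hx
    _ = R ^ 2 * (8 + 8 * π) + R ^ 2 * (π * Real.log x) := by ring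
    _ ≤ 4 * x * (8 + 8 * π) + (x / π + 3 * √x) * (π * Real.log x) := by gcongr
    _ = 4 * x * (8 + 8 * π) + x * Real.log x + 3 * π * (√x * Real.log x) := by
        field_simp
        ring
    _ ≤ 4 * x * (8 + 8 * π) + x * Real.log x + 3 * π * (√x * (2 * √x)) := by gcongr
    _ = x * (32 + 38 * π + Real.log x) := by linear_combination 6 * π * hsx
    _ ≤ x * (155 + Real.log x) := by gcongr; linarith

lemma mul_add_log_le_sub_one_mul_add_log {x : ℝ} (hx : 2 ≤ x) :
    x * (155 + Real.log x) ≤ (x - 1) * (311 + Real.log x) := by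
  linarith [Real.log_le_sub_one_of_pos (show 0 < x by linarith)]

theorem exists_injective_norm_le_one_sum_inv_norm_sub_sq_le (ι : Type*) [Fintype ι]
    [DecidableEq ι] :
    ∃ b : ι → ℂ, Function.Injective b ∧ (∀ i, ‖b i‖ ≤ 1) ∧
      ∀ k, ∑ l ∈ univ.erase k, (‖b k - b l‖ ^ 2)⁻¹ ≤
        (Fintype.card ι - 1) * (311 + Real.log (Fintype.card ι)) := by
  obtain ⟨p, hp, hpR⟩ := exists_injective_gaussianInt_norm_le ι
  set R := √(Fintype.card ι / π) + 1
  have hR : 1 ≤ R := le_add_of_nonneg_left (Real.sqrt_nonneg _)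
  have hR0 : (R : ℂ) ≠ 0 := by exact_mod_cast (by linarith : R ≠ 0)
  have hnormR : ‖(R : ℂ)‖ = R := Complex.norm_of_nonneg (by linarith)
  refine ⟨fun i ↦ p i / R, fun i j h ↦ ?_, fun i ↦ ?_, fun k ↦ ?_⟩
  · exact hp (GaussianInt.toComplex_inj.mp ((div_left_inj' hR0).mp h))
  · rw [norm_div, hnormR]
    exact div_le_one_of_le₀ (hpR i) (by linarith)
  · have hscale (l : ι) : (‖(p k : ℂ) / R - p l / R‖ ^ 2)⁻¹ =
        R ^ 2 * (‖(p k : ℂ) - p l‖ ^ 2)⁻¹ := by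
      rw [← sub_div, norm_div, hnormR, div_pow, inv_div, div_eq_mul_inv]
    rw [sum_congr rfl fun l _ ↦ hscale l, ← mul_sum]
    obtain hcard | hcard : Fintype.card ι = 1 ∨ 1 < Fintype.card ι :=
      (Nat.one_le_of_lt (Fintype.card_pos_iff.mpr ⟨k⟩)).eq_or_lt'
    · simp [univ_eq_singleton_of_card_one k hcard, hcard]
    have hcard' : (2 : ℝ) ≤ Fintype.card ι := by exact_mod_cast hcard
    calc R ^ 2 * ∑ l ∈ univ.erase k, (‖(p k : ℂ) - p l‖ ^ 2)⁻¹
        ≤ R ^ 2 * (8 + 2 * π * (1 + Real.log (2 * R))) := by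
          gcongr
          exact sum_inv_norm_sub_sq_gaussianInt_le hp hR hpR k
      _ ≤ Fintype.card ι * (155 + Real.log (Fintype.card ι)) :=
          sq_sqrt_div_pi_add_one_mul_le (by linarith)
      _ ≤ (Fintype.card ι - 1) * (311 + Real.log (Fintype.card ι)) :=
          mul_add_log_le_sub_one_mul_add_log hcard'

end DiscPoints

section Commutator

lemma diagonal_mul_sub_mul_diagonal_eq {ι R : Type*} [Fintype ι] [DecidableEq ι] [Field R]
    {d : ι → R} (hd : Function.Injective d) {A : Matrix ι ι R} (hA : ∀ i, A i i = 0) :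
    Matrix.diagonal d * Matrix.of (fun i j ↦ A i j / (d i - d j)) -
      Matrix.of (fun i j ↦ A i j / (d i - d j)) * Matrix.diagonal d = A := by
  ext i j
  rw [Matrix.sub_apply, Matrix.diagonal_mul, Matrix.mul_diagonal, Matrix.of_apply,
    mul_comm (_ / _), ← sub_mul]
  rcases eq_or_ne i j with rfl | hij
  · rw [sub_self, zero_mul, hA]
  · exact mul_div_cancel₀ _ (sub_ne_zero.mpr (hd.ne hij))

theorem exists_eq_commutator_diagonal_frobNorm_le {m : ℕ} {A : Matrix (Fin m) (Fin m) ℂ}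
    (hA : ∀ i, A i i = 0) :
    ∃ (d : Fin m → ℂ) (C : Matrix (Fin m) (Fin m) ℂ),
      A = Matrix.diagonal d * C - C * Matrix.diagonal d ∧ ‖d‖ ≤ 1 ∧
        frobNorm C ≤ √(311 + Real.log m) * frobNorm A := by
  obtain ⟨b, hb, hb1, hbsum⟩ := exists_injective_norm_le_one_sum_inv_norm_sub_sq_le (Fin m)
  obtain ⟨σ, hσ⟩ := exists_perm_sum_mul_le (a := fun i j ↦ ‖A i j‖ ^ 2)
    (fun i j ↦ by positivity) (fun i ↦ by simp [hA]) hbsum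
  have hlog : 0 ≤ Real.log m := Real.log_natCast_nonneg m
  refine ⟨b ∘ σ, _, (diagonal_mul_sub_mul_diagonal_eq (hb.comp σ.injective) hA).symm,
    (pi_norm_le_iff_of_nonneg zero_le_one).mpr fun i ↦ hb1 (σ i), ?_⟩
  rw [frobNorm, frobNorm, ← Real.sqrt_mul (by linarith)]
  refine Real.sqrt_le_sqrt ?_
  simpa only [Matrix.of_apply, Function.comp_apply, div_eq_mul_inv, norm_mul, norm_inv,
    mul_pow, inv_pow, Fintype.card_fin] using hσ

end Commutator

/-- There is an absolute constant `c` such that every zero-trace `m×m` complex matrix `A`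
is a commutator `A = BC - CB` with `B` normal and `‖B‖ ‖C‖₂ ≤ (c + log m)^{1/2} ‖A‖₂`. -/
theorem stmt7 :
    ∃ c : ℝ, ∀ (m : ℕ), 1 ≤ m → ∀ A : Matrix (Fin m) (Fin m) ℂ, A.trace = 0 →
      ∃ B C : Matrix (Fin m) (Fin m) ℂ,
        A = B * C - C * B ∧ B * star B = star B * B ∧
          opNorm B * frobNorm C ≤ Real.sqrt (c + Real.log m) * frobNorm A := by
  refine ⟨311, fun m _ A hA ↦ ?_⟩
  obtain ⟨U, hU⟩ := exists_unitary_conj_diag_eq_zero hA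
  obtain ⟨d, C, hcomm, hd, hC⟩ := exists_eq_commutator_diagonal_frobNorm_le hU
  refine ⟨conjStarAlgAut ℂ _ U (Matrix.diagonal d), conjStarAlgAut ℂ _ U C, ?_, ?_, ?_⟩
  · rw [← map_mul, ← map_mul, ← map_sub, ← hcomm, ← Unitary.conjStarAlgAut_mul_apply,
      Unitary.mul_star_self, map_one, StarAlgEquiv.one_apply]
  · rw [← map_star, ← map_mul, ← map_mul, Matrix.star_eq_conjTranspose,
      Matrix.diagonal_conjTranspose, Matrix.commute_diagonal]
  · rw [opNorm_conjStarAlgAut, opNorm_diagonal, frobNorm_conjStarAlgAut]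
    rw [frobNorm_conjStarAlgAut] at hC
    exact (mul_le_of_le_one_left (Real.sqrt_nonneg _) hd).trans hC
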